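/- arXiv:2007.08829 — 2 statements merged into one kernel-verified Lean document; each statement's English description precedes it below -/
import Mathlib

section
/- For every risk profile g ∈ G and every X ∈ L^1, the g-adjusted Expected Shortfall, defined as ES^g(X) = inf{m ∈ ℝ : ES_p(X − m) ≤ g(p) for all p ∈ [0,1]}, satisfies ES^g(X) = sup_{p∈[0,1]} {ES_p(X) − g(p)}, where the convention ∞ − ∞ = −∞ is used. -/
open MeasureTheory Set Filter

variable {Ω : Type*} [MeasurableSpace Ω]

/-- An atomless probability space: every set of positive measure has a subset of
strictly smaller positive measure. -/
def Atomless (μ : Measure Ω) : Prop :=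
  ∀ A : Set Ω, MeasurableSet A → 0 < μ A →
    ∃ B : Set Ω, MeasurableSet B ∧ B ⊆ A ∧ 0 < μ B ∧ μ B < μ A

/-- Value at Risk at level `p`: the left `p`-quantile for `p ∈ (0,1]`, the essential
infimum for `p = 0`.  Values are extended reals. -/
noncomputable def VaR (μ : Measure Ω) (X : Ω → ℝ) (p : ℝ) : EReal :=
  if p = 0 then essInf (fun ω => (X ω : EReal)) μ
  else sInf ((fun x : ℝ => (x : EReal)) '' {x : ℝ | ENNReal.ofReal p ≤ μ {ω | X ω ≤ x}})

/-- Real-valued version of the left `p`-quantile, used as the integrand of ES. -/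
noncomputable def VaRr (μ : Measure Ω) (X : Ω → ℝ) (p : ℝ) : ℝ :=
  sInf {x : ℝ | ENNReal.ofReal p ≤ μ {ω | X ω ≤ x}}

/-- Expected Shortfall at level `p`: `(1/(1-p)) ∫_p^1 VaR_q(X) dq` for `p ∈ [0,1)`,
the essential supremum for `p = 1`. -/
noncomputable def ES (μ : Measure Ω) (X : Ω → ℝ) (p : ℝ) : EReal :=
  if p = 1 then essSup (fun ω => (X ω : EReal)) μ
  else (((1 - p)⁻¹ * ∫ q in Set.Ioo p 1, VaRr μ X q : ℝ) : EReal)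

/-- The `g`-adjusted Expected Shortfall, `sup_{p ∈ [0,1]} (ES_p(X) - g(p))`.
Note that in `EReal` one has `⊤ - ⊤ = ⊥`, matching the convention `∞ - ∞ = -∞`. -/
noncomputable def adjES (μ : Measure Ω) (g : ℝ → EReal) (X : Ω → ℝ) : EReal :=
  ⨆ p ∈ Set.Icc (0:ℝ) 1, (ES μ X p - g p)

/-- The class `𝒢` of risk profiles: increasing functions `[0,1] → (-∞,∞]` that are
not identically `∞`. -/
def IsRiskProfile (g : ℝ → EReal) : Prop :=
  MonotoneOn g (Set.Icc (0:ℝ) 1) ∧ (∀ p ∈ Set.Icc (0:ℝ) 1, g p ≠ ⊥) ∧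
    ∃ p ∈ Set.Icc (0:ℝ) 1, g p ≠ ⊤

/-- Second-order stochastic dominance: `SSD μ X Y` means `X ≥_SSD Y`, i.e. every
risk-averse agent prefers `X` to `Y` (positive values are losses). -/
def SSD (μ : Measure Ω) (X Y : Ω → ℝ) : Prop :=
  ∀ u : ℝ → ℝ, Monotone u → ConcaveOn ℝ Set.univ u →
    ∫ ω, u (-(Y ω)) ∂μ ≤ ∫ ω, u (-(X ω)) ∂μ

/-- The inf-convolution of the functionals `ρ_1, …, ρ_n`. -/
noncomputable def infConv (μ : Measure Ω) {n : ℕ} (ρ : Fin n → ((Ω → ℝ) → EReal))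
    (X : Ω → ℝ) : EReal :=
  ⨅ (Y : Fin n → Ω → ℝ) (_ : (∀ i, Integrable (Y i) μ) ∧ ∀ ω, (∑ i, Y i ω) = X ω),
    ∑ i, ρ i (Y i)

/-- The class `𝒢_VaR`: risk profiles finite on `[0,1)`, left-continuous on `[0,1]`
and right-continuous at `0`. -/
def GVaRProfile (g : ℝ → EReal) : Prop :=
  IsRiskProfile g ∧ (∀ p ∈ Set.Ico (0:ℝ) 1, g p ≠ ⊤) ∧
    (∀ p ∈ Set.Ioc (0:ℝ) 1, Filter.Tendsto g (nhdsWithin p (Set.Ico 0 p)) (nhds (g p))) ∧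
    Filter.Tendsto g (nhdsWithin 0 (Set.Ioc 0 1)) (nhds (g 0))

/-- The class `𝒢_ES`: profiles in `𝒢_VaR` such that `h_g(p) = (1-p)g(p)` is concave
on `(0,1)` and left-continuous at `1` (with `h_g(1) = 0` by the convention `0·∞ = 0`). -/
def GESProfile (g : ℝ → EReal) : Prop :=
  GVaRProfile g ∧ ConcaveOn ℝ (Set.Ioo (0:ℝ) 1) (fun p => (1 - p) * (g p).toReal) ∧
    Filter.Tendsto (fun p => (1 - p) * (g p).toReal) (nhdsWithin 1 (Set.Ico (0:ℝ) 1)) (nhds 0)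

/-!
Cash additivity, `ES_p(X - m) = ES_p(X) - m`, turns the acceptance condition
`ES_p(X - m) ≤ g(p)` for all `p` into `sup_p (ES_p(X) - g(p)) ≤ m`, and the infimum of the reals
above an extended real is that extended real. For `p < 1` cash additivity integrates the
corresponding property of quantiles, which requires the quantile function of `X` to be integrable
on `(0, 1)`. It is, because under the uniform law on `(0, 1)` it has the same distribution as `X`.
-/

lemma csInf_setOf_le_le_iff {α β : Type*} [ConditionallyCompleteLinearOrder α]
    [TopologicalSpace α] [OrderTopology α] [Preorder β] [TopologicalSpace β]
    [ClosedIciTopology β] {f : α → β} (hf : Monotone f)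
    (hcont : ∀ x, ContinuousWithinAt f (Ici x) x) {b : β} (hne : {y | b ≤ f y}.Nonempty)
    (hbdd : BddBelow {y | b ≤ f y}) {x : α} :
    sInf {y | b ≤ f y} ≤ x ↔ b ≤ f x := by
  set S := {y | b ≤ f y}
  refine ⟨fun hle ↦ ?_, fun hx ↦ csInf_le hbdd hx⟩
  have : (nhdsWithin (sInf S) S).NeBot :=
    mem_closure_iff_nhdsWithin_neBot.1 (csInf_mem_closure hne hbdd)
  have hlim : Tendsto f (nhdsWithin (sInf S) S) (nhds (f (sInf S))) :=
    (hcont (sInf S)).mono fun _ hy ↦ csInf_le hbdd hy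
  exact (ge_of_tendsto hlim eventually_mem_nhdsWithin).trans (hf hle)

lemma sInf_coe_image_setOf_le (a : EReal) :
    sInf ((fun m : ℝ ↦ (m : EReal)) '' {m : ℝ | a ≤ m}) = a := by
  refine le_antisymm (EReal.le_of_forall_lt_iff_le.1 fun z hz ↦ ?_) (le_sInf ?_)
  · exact sInf_le (mem_image_of_mem _ hz.le)
  · rintro _ ⟨m, hm, rfl⟩
    exact hm

lemma ereal_sub_coe_le_iff {a b : EReal} {m : ℝ} : a - m ≤ b ↔ a ≤ b + m :=
  EReal.sub_le_iff_le_add (.inl (EReal.coe_ne_bot m)) (.inl (EReal.coe_ne_top m))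

lemma ereal_sub_coe_le_iff_sub_le_coe {a b : EReal} {m : ℝ} : a - m ≤ b ↔ a - b ≤ m := by
  rw [ereal_sub_coe_le_iff, add_comm,
    EReal.sub_le_iff_le_add (.inr (EReal.coe_ne_top m)) (.inr (EReal.coe_ne_bot m))]

lemma essSup_le_iff_ae_le {β : Type*} [CompleteLinearOrder β] [TopologicalSpace β]
    [FirstCountableTopology β] [OrderTopology β] {μ : Measure Ω} {f : Ω → β} {c : β} :
    essSup f μ ≤ c ↔ ∀ᵐ ω ∂μ, f ω ≤ c :=
  ⟨fun h ↦ Eventually.mono ae_le_essSup fun _ hω ↦ hω.trans h, essSup_le_of_ae_le c⟩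

lemma essSup_sub_coe (μ : Measure Ω) (f : Ω → EReal) (m : ℝ) :
    essSup (fun ω ↦ f ω - m) μ = essSup f μ - m :=
  eq_of_forall_ge_iff fun c ↦ by
    simp only [essSup_le_iff_ae_le, ereal_sub_coe_le_iff]

section ExpectedShortfall

open ProbabilityTheory

lemma sInf_setOf_le_cdf_le_iff (ν : Measure ℝ) {q : ℝ} (hq : q ∈ Ioo (0 : ℝ) 1) {x : ℝ} :
    sInf {y | q ≤ cdf ν y} ≤ x ↔ q ≤ cdf ν x := by
  have hne : {y | q ≤ cdf ν y}.Nonempty :=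
    ((tendsto_cdf_atTop ν).eventually (eventually_ge_nhds hq.2)).exists
  have hbdd : BddBelow {y | q ≤ cdf ν y} := by
    obtain ⟨a, ha⟩ := ((tendsto_cdf_atBot ν).eventually (eventually_lt_nhds hq.1)).exists
    exact ⟨a, fun y hy ↦ ((monotone_cdf ν).reflect_lt (ha.trans_le hy)).le⟩
  exact csInf_setOf_le_le_iff (monotone_cdf ν) (cdf ν).right_continuous hne hbdd

variable {μ : Measure Ω} [IsProbabilityMeasure μ] {X : Ω → ℝ}

lemma ofReal_le_measure_setOf_le_iff_le_cdf (hX : AEMeasurable X μ) {q x : ℝ} :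
    ENNReal.ofReal q ≤ μ {ω | X ω ≤ x} ↔ q ≤ cdf (μ.map X) x := by
  have := Measure.isProbabilityMeasure_map hX
  have hmap : μ.map X (Iic x) = μ {ω | X ω ≤ x} :=
    Measure.map_apply_of_aemeasurable hX measurableSet_Iic
  rw [← hmap, ← ofReal_cdf, ENNReal.ofReal_le_ofReal_iff (cdf_nonneg _ _)]

lemma VaRr_le_iff_le_cdf (hX : AEMeasurable X μ) {q x : ℝ} (hq : q ∈ Ioo (0 : ℝ) 1) :
    VaRr μ X q ≤ x ↔ q ≤ cdf (μ.map X) x := by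
  simp only [VaRr, ofReal_le_measure_setOf_le_iff_le_cdf hX]
  exact sInf_setOf_le_cdf_le_iff _ hq

lemma VaRr_sub_const (hX : AEMeasurable X μ) {q : ℝ} (hq : q ∈ Ioo (0 : ℝ) 1) (m : ℝ) :
    VaRr μ (fun ω ↦ X ω - m) q = VaRr μ X q - m :=
  eq_of_forall_ge_iff fun x ↦ by
    rw [sub_le_iff_le_add, VaRr_le_iff_le_cdf (hX.sub_const m) hq, VaRr_le_iff_le_cdf hX hq,
      ← ofReal_le_measure_setOf_le_iff_le_cdf (hX.sub_const m),
      ← ofReal_le_measure_setOf_le_iff_le_cdf hX]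
    simp only [sub_le_iff_le_add]

lemma monotoneOn_VaRr (hX : AEMeasurable X μ) : MonotoneOn (VaRr μ X) (Ioo 0 1) :=
  fun _ hp _ hq hpq ↦ (VaRr_le_iff_le_cdf hX hp).2 (hpq.trans ((VaRr_le_iff_le_cdf hX hq).1 le_rfl))

lemma aemeasurable_VaRr (hX : AEMeasurable X μ) :
    AEMeasurable (VaRr μ X) (volume.restrict (Ioo (0 : ℝ) 1)) :=
  aemeasurable_restrict_of_monotoneOn measurableSet_Ioo (monotoneOn_VaRr hX)

lemma volume_restrict_Ioo_zero_one_Iic {c : ℝ} (hc : c ≤ 1) :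
    volume.restrict (Ioo (0 : ℝ) 1) (Iic c) = ENNReal.ofReal c := by
  rw [restrict_Ioo_eq_restrict_Ioc, Measure.restrict_apply measurableSet_Iic, inter_comm,
    Ioc_inter_Iic, min_eq_right hc, Real.volume_Ioc, sub_zero]

lemma identDistrib_VaRr (hX : AEMeasurable X μ) :
    IdentDistrib (VaRr μ X) X (volume.restrict (Ioo (0 : ℝ) 1)) μ where
  aemeasurable_fst := aemeasurable_VaRr hX
  aemeasurable_snd := hX
  map_eq := by
    have hV := aemeasurable_VaRr hX
    have := Measure.isProbabilityMeasure_map hX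
    have : IsProbabilityMeasure (volume.restrict (Ioo (0 : ℝ) 1)) := ⟨by simp⟩
    have := Measure.isProbabilityMeasure_map hV
    refine Measure.ext_of_Iic _ _ fun x ↦ ?_
    have hae : VaRr μ X ⁻¹' Iic x =ᵐ[volume.restrict (Ioo (0 : ℝ) 1)] Iic (cdf (μ.map X) x) := by
      filter_upwards [ae_restrict_mem measurableSet_Ioo] with q hq
      exact propext (VaRr_le_iff_le_cdf hX hq)
    rw [Measure.map_apply_of_aemeasurable hV measurableSet_Iic, measure_congr hae,
      volume_restrict_Ioo_zero_one_Iic (cdf_le_one _ _), ofReal_cdf]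

lemma integrableOn_VaRr (hX : Integrable X μ) : IntegrableOn (VaRr μ X) (Ioo 0 1) :=
  (identDistrib_VaRr hX.aemeasurable).integrable_iff.2 hX

lemma setIntegral_VaRr_sub_const (hX : Integrable X μ) {p : ℝ} (hp : p ∈ Icc (0 : ℝ) 1) (m : ℝ) :
    ∫ q in Ioo p 1, VaRr μ (fun ω ↦ X ω - m) q
      = (∫ q in Ioo p 1, VaRr μ X q) - (1 - p) * m := by
  have hsub : Ioo p 1 ⊆ Ioo (0 : ℝ) 1 := Ioo_subset_Ioo_left hp.1
  calc ∫ q in Ioo p 1, VaRr μ (fun ω ↦ X ω - m) q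
      = ∫ q in Ioo p 1, (VaRr μ X q - m) :=
        setIntegral_congr_fun measurableSet_Ioo
          fun q hq ↦ VaRr_sub_const hX.aemeasurable (hsub hq) m
    _ = (∫ q in Ioo p 1, VaRr μ X q) - ∫ _ in Ioo p 1, m :=
        integral_sub ((integrableOn_VaRr hX).mono_set hsub) (by simp)
    _ = (∫ q in Ioo p 1, VaRr μ X q) - (1 - p) * m := by simp [hp.2]

lemma ES_sub_const (hX : Integrable X μ) {p : ℝ} (hp : p ∈ Icc (0 : ℝ) 1) (m : ℝ) :
    ES μ (fun ω ↦ X ω - m) p = ES μ X p - m := by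
  rcases eq_or_ne p 1 with rfl | hp1
  · simp only [ES, if_true, EReal.coe_sub, essSup_sub_coe]
  · have h1p : 1 - p ≠ 0 := sub_ne_zero.2 hp1.symm
    simp only [ES, if_neg hp1]
    rw [setIntegral_VaRr_sub_const hX hp, mul_sub, inv_mul_cancel_left₀ h1p, EReal.coe_sub]

end ExpectedShortfall

theorem stmt0_general (μ : Measure Ω) [IsProbabilityMeasure μ] (g : ℝ → EReal) (X : Ω → ℝ)
    (hX : Integrable X μ) :
    sInf ((fun m : ℝ => (m : EReal)) ''
        {m : ℝ | ∀ p ∈ Set.Icc (0:ℝ) 1, ES μ (fun ω => X ω - m) p ≤ g p})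
      = adjES μ g X := by
  have hiff (m : ℝ) :
      (∀ p ∈ Icc (0 : ℝ) 1, ES μ (fun ω ↦ X ω - m) p ≤ g p) ↔ adjES μ g X ≤ m := by
    simp only [adjES, iSup_le_iff]
    refine forall₂_congr fun p hp ↦ ?_
    rw [ES_sub_const hX hp, ereal_sub_coe_le_iff_sub_le_coe]
  simp only [hiff, sInf_coe_image_setOf_le]

/-- For every risk profile `g ∈ 𝒢` and every `X ∈ L¹`, the
`g`-adjusted Expected Shortfall defined as
`inf {m ∈ ℝ : ES_p(X - m) ≤ g(p) for all p ∈ [0,1]}` coincides with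
`sup_{p ∈ [0,1]} (ES_p(X) - g(p))` (with the convention `∞ - ∞ = -∞`). -/
theorem stmt0 (μ : Measure Ω) [IsProbabilityMeasure μ] (hatomless : Atomless μ)
    (g : ℝ → EReal) (hg : IsRiskProfile g) (X : Ω → ℝ) (hX : Integrable X μ) :
    sInf ((fun m : ℝ => (m : EReal)) ''
        {m : ℝ | ∀ p ∈ Set.Icc (0:ℝ) 1, ES μ (fun ω => X ω - m) p ≤ g p})
      = adjES μ g X :=
  stmt0_general μ g X hX
end

section
/- Let g ∈ G. Then g belongs to G_VaR (i.e., g is finite on [0,1), left-continuous on [0,1], and right-continuous at 0) if and only if there exists a random variable Z, bounded from below, such that g(p) = VaR_p(Z) for every p ∈ [0,1]. -/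
open MeasureTheory Set Filter

variable {Ω : Type*} [MeasurableSpace Ω]

/-! Quantiles are left-continuous in the level and tend to the essential infimum as the level
decreases to `0`; this holds for every random variable and gives one direction. Conversely, an
atomless space carries a uniform variable `U`, and `g ∘ U` has quantile function `g`: its sublevel
sets are the preimages under `U` of initial segments of `[0,1]`, and by left continuity such a
segment has length at least `p` exactly when the level is at least `g p`. To build `U`, take a
maximal chain of measurable sets ordered by inclusion with strictly smaller measure. Atomlessness
forces the measures of its members to fill `[0,1]`, and `U ω` is the infimum of the measures at
which the chain contains `ω`. -/

/-- A chain of measurable sets that is saturated up to measure: any measurable set nested with all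
members of different measure has the measure of some member. Maximal chains for the relation
`A ⊆ B ∧ μ A < μ B` have this property. Maximality for plain inclusion would not do, since null sets
could then fill a maximal chain without exhausting the measures. -/
structure IsSaturatedChain (μ : Measure Ω) (C : Set (Set Ω)) : Prop where
  measurableSet : ∀ A ∈ C, MeasurableSet A
  subset_of_measure_le : ∀ A ∈ C, ∀ B ∈ C, μ A ≤ μ B → A ⊆ B
  measure_mem_image : ∀ A, MeasurableSet A → (∀ B ∈ C, μ B < μ A → B ⊆ A) →
    (∀ B ∈ C, μ A < μ B → A ⊆ B) → μ A ∈ μ '' C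

theorem exists_isSaturatedChain (μ : Measure Ω) : ∃ C, IsSaturatedChain μ C := by
  let r : {A : Set Ω // MeasurableSet A} → {A : Set Ω // MeasurableSet A} → Prop :=
    fun A B ↦ A.1 ⊆ B.1 ∧ μ A.1 < μ B.1
  have hM : IsMaxChain r (maxChain r) := maxChain_spec
  refine ⟨Subtype.val '' maxChain r, ?_, ?_, ?_⟩
  · rintro _ ⟨A, -, rfl⟩
    exact A.2
  · rintro _ ⟨A, hA, rfl⟩ _ ⟨B, hB, rfl⟩ hAB
    by_contra hsub
    rcases hM.isChain hA hB (fun h ↦ hsub (h ▸ Subset.rfl)) with h | h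
    · exact hsub h.1
    · exact hAB.not_gt h.2
  · intro A hA hbelow habove
    by_contra hnot
    have hchain : IsChain r (insert ⟨A, hA⟩ (maxChain r)) := by
      refine hM.isChain.insert fun B hB _ ↦ ?_
      have hne : μ B.1 ≠ μ A := fun h ↦ hnot ⟨B, ⟨B, hB, rfl⟩, h⟩
      rcases hne.lt_or_gt with h | h
      · exact Or.inr ⟨hbelow B ⟨B, hB, rfl⟩ h, h⟩
      · exact Or.inl ⟨habove B ⟨B, hB, rfl⟩ h, h⟩
    have hmem : ⟨A, hA⟩ ∈ maxChain r :=
      hM.2 hchain (subset_insert _ _) ▸ mem_insert _ _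
    exact hnot ⟨A, ⟨⟨A, hA⟩, hmem, rfl⟩, rfl⟩

namespace IsSaturatedChain

variable {μ : Measure Ω} {C : Set (Set Ω)}

theorem iSup_measure_mem (hC : IsSaturatedChain μ C) {A : ℕ → Set Ω} (hA : ∀ n, A n ∈ C) :
    ⨆ n, μ (A n) ∈ μ '' C := by
  have hdir : Directed (· ⊆ ·) A := fun i j ↦ (le_total (μ (A i)) (μ (A j))).elim
    (fun h ↦ ⟨j, hC.subset_of_measure_le _ (hA i) _ (hA j) h, Subset.rfl⟩)
    (fun h ↦ ⟨i, Subset.rfl, hC.subset_of_measure_le _ (hA j) _ (hA i) h⟩)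
  rw [← hdir.measure_iUnion]
  refine hC.measure_mem_image _ (.iUnion fun n ↦ hC.measurableSet _ (hA n)) ?_ ?_
  · intro F hF hlt
    rw [hdir.measure_iUnion] at hlt
    obtain ⟨n, hn⟩ := lt_iSup_iff.1 hlt
    exact (hC.subset_of_measure_le F hF _ (hA n) hn.le).trans (subset_iUnion A n)
  · intro F hF hlt
    exact iUnion_subset fun n ↦ hC.subset_of_measure_le _ (hA n) F hF
      ((measure_mono (subset_iUnion A n)).trans hlt.le)

theorem iInf_measure_mem [IsFiniteMeasure μ] (hC : IsSaturatedChain μ C) {A : ℕ → Set Ω}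
    (hA : ∀ n, A n ∈ C) : ⨅ n, μ (A n) ∈ μ '' C := by
  have hdir : Directed (· ⊇ ·) A := fun i j ↦ (le_total (μ (A i)) (μ (A j))).elim
    (fun h ↦ ⟨i, Subset.rfl, hC.subset_of_measure_le _ (hA i) _ (hA j) h⟩)
    (fun h ↦ ⟨j, hC.subset_of_measure_le _ (hA j) _ (hA i) h, Subset.rfl⟩)
  have hmeas : ∀ n, MeasurableSet (A n) := fun n ↦ hC.measurableSet _ (hA n)
  have hinter : μ (⋂ n, A n) = ⨅ n, μ (A n) :=
    hdir.measure_iInter (fun n ↦ (hmeas n).nullMeasurableSet) ⟨0, measure_ne_top _ _⟩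
  rw [← hinter]
  refine hC.measure_mem_image _ (.iInter hmeas) ?_ ?_
  · intro F hF hlt
    exact subset_iInter fun n ↦ hC.subset_of_measure_le F hF _ (hA n)
      (hlt.le.trans (measure_mono (iInter_subset A n)))
  · intro F hF hlt
    rw [hinter] at hlt
    obtain ⟨n, hn⟩ := iInf_lt_iff.1 hlt
    exact (iInter_subset A n).trans (hC.subset_of_measure_le _ (hA n) F hF hn.le)

theorem sSup_mem (hC : IsSaturatedChain μ C) {S : Set ENNReal} (hS : S ⊆ μ '' C)
    (hne : S.Nonempty) : sSup S ∈ μ '' C := by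
  obtain ⟨u, hu, hlim, huS⟩ := exists_seq_tendsto_sSup hne (OrderTop.bddAbove S)
  choose A hA hAu using fun n ↦ hS (huS n)
  have hsup : ⨆ n, μ (A n) = sSup S := by
    simpa only [hAu] using tendsto_nhds_unique (tendsto_atTop_iSup hu) hlim
  exact hsup ▸ hC.iSup_measure_mem hA

theorem sInf_mem [IsFiniteMeasure μ] (hC : IsSaturatedChain μ C) {S : Set ENNReal}
    (hS : S ⊆ μ '' C) (hne : S.Nonempty) : sInf S ∈ μ '' C := by
  obtain ⟨u, hu, hlim, huS⟩ := exists_seq_tendsto_sInf hne (OrderBot.bddBelow S)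
  choose A hA hAu using fun n ↦ hS (huS n)
  have hinf : ⨅ n, μ (A n) = sInf S := by
    simpa only [hAu] using tendsto_nhds_unique (tendsto_atTop_iInf hu) hlim
  exact hinf ▸ hC.iInf_measure_mem hA

theorem zero_mem (hC : IsSaturatedChain μ C) : 0 ∈ μ '' C := by
  simpa only [measure_empty] using hC.measure_mem_image ∅ .empty
    (fun _ _ h ↦ absurd h (by simp)) (fun _ _ _ ↦ empty_subset _)

theorem measure_univ_mem (hC : IsSaturatedChain μ C) : μ univ ∈ μ '' C :=
  hC.measure_mem_image univ .univ (fun _ _ _ ↦ subset_univ _)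
    (fun _ _ h ↦ absurd h (measure_mono (subset_univ _)).not_gt)

theorem exists_measure_btwn [IsFiniteMeasure μ] (hμ : Atomless μ) (hC : IsSaturatedChain μ C)
    {B D : Set Ω} (hB : B ∈ C) (hD : D ∈ C) (hlt : μ B < μ D) :
    ∃ F ∈ C, μ B < μ F ∧ μ F < μ D := by
  have hBD : B ⊆ D := hC.subset_of_measure_le B hB D hD hlt.le
  have hBm : MeasurableSet B := hC.measurableSet B hB
  have hDm : MeasurableSet D := hC.measurableSet D hD
  have hdiff : μ B + μ (D \ B) = μ D := by
    rw [add_comm, ← measure_sdiff_add_inter (μ := μ) D hBm, inter_eq_right.2 hBD]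
  have hpos : 0 < μ (D \ B) := by
    rw [measure_sdiff hBD hBm.nullMeasurableSet (measure_ne_top _ _)]
    exact tsub_pos_of_lt hlt
  obtain ⟨E, hE, hED, hEpos, hElt⟩ := hμ (D \ B) (hDm.diff hBm) hpos
  have hadd : μ (B ∪ E) = μ B + μ E := measure_union (disjoint_sdiff_right.mono_right hED) hE
  have hlow : μ B < μ (B ∪ E) := by
    rw [hadd]
    exact ENNReal.lt_add_right (measure_ne_top _ _) hEpos.ne'
  have hhigh : μ (B ∪ E) < μ D := by
    rw [hadd, ← hdiff]
    exact ENNReal.add_lt_add_left (measure_ne_top _ _) hElt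
  by_contra! hgap
  -- As no member lies strictly between `B` and `D`, all members are nested with `B ∪ E`.
  obtain ⟨F, hF, hFeq⟩ := hC.measure_mem_image (B ∪ E) (hBm.union hE)
    (fun F hF hFlt ↦ by
      have hFB : μ F ≤ μ B := not_lt.1 fun h ↦ (hgap F hF h).not_gt (hFlt.trans hhigh)
      exact (hC.subset_of_measure_le F hF B hB hFB).trans subset_union_left)
    (fun F hF hFlt ↦ (union_subset hBD (hED.trans sdiff_subset)).trans
      (hC.subset_of_measure_le D hD F hF (hgap F hF (hlow.trans hFlt))))
  exact (hgap F hF (hFeq ▸ hlow)).not_gt (hFeq ▸ hhigh)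

theorem image_measure_eq_Iic [IsFiniteMeasure μ] (hμ : Atomless μ) (hC : IsSaturatedChain μ C) :
    μ '' C = Iic (μ univ) := by
  refine Subset.antisymm (image_subset_iff.2 fun A _ ↦ measure_mono (subset_univ A)) fun t ht ↦ ?_
  by_contra hnot
  obtain ⟨B, hB, hBeq⟩ := hC.sSup_mem (S := μ '' C ∩ Iic t) inter_subset_left
    ⟨0, hC.zero_mem, mem_Iic.2 zero_le⟩
  obtain ⟨D, hD, hDeq⟩ := hC.sInf_mem (S := μ '' C ∩ Ici t) inter_subset_left
    ⟨μ univ, hC.measure_univ_mem, ht⟩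
  have hBt : μ B < t := (hBeq.trans_le (sSup_le fun _ h ↦ h.2)).lt_of_ne
    fun h ↦ hnot ⟨B, hB, h⟩
  have htD : t < μ D := (hDeq ▸ le_sInf fun _ h ↦ h.2 : t ≤ μ D).lt_of_ne
    fun h ↦ hnot ⟨D, hD, h.symm⟩
  obtain ⟨F, hF, hBF, hFD⟩ := exists_measure_btwn hμ hC hB hD (hBt.trans htD)
  rcases le_total (μ F) t with h | h
  · exact hBF.not_ge (hBeq ▸ le_sSup ⟨mem_image_of_mem μ hF, h⟩)
  · exact hFD.not_ge (hDeq ▸ sInf_le ⟨mem_image_of_mem μ hF, h⟩)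

end IsSaturatedChain

section Uniform

open scoped unitInterval

theorem Atomless.exists_monotone_measure_eq {μ : Measure Ω} [IsProbabilityMeasure μ]
    (hμ : Atomless μ) : ∃ A : I → Set Ω, Monotone A ∧ (∀ t, MeasurableSet (A t)) ∧
      ∀ t, μ (A t) = ENNReal.ofReal t := by
  obtain ⟨C, hC⟩ := exists_isSaturatedChain μ
  have hmem (t : I) : ENNReal.ofReal t ∈ μ '' C := by
    rw [hC.image_measure_eq_Iic hμ, measure_univ]
    exact ENNReal.ofReal_le_one.2 t.2.2
  choose A hA hμA using hmem
  refine ⟨A, fun s t hst ↦ hC.subset_of_measure_le _ (hA s) _ (hA t) ?_,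
    fun t ↦ hC.measurableSet _ (hA t), hμA⟩
  rw [hμA, hμA]
  exact ENNReal.ofReal_le_ofReal hst

theorem exists_measurable_preimage_Iio_subset_subset_preimage_Iic {β : Type*}
    [CompleteLinearOrder β] [DenselyOrdered β] [TopologicalSpace β] [OrderTopology β]
    [SecondCountableTopology β] [MeasurableSpace β] [BorelSpace β] {A : β → Set Ω}
    (hmono : Monotone A) (hmeas : ∀ t, MeasurableSet (A t)) :
    ∃ U : Ω → β, Measurable U ∧ ∀ t, U ⁻¹' Iio t ⊆ A t ∧ A t ⊆ U ⁻¹' Iic t := by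
  classical
  obtain ⟨D, hDc, hD⟩ := TopologicalSpace.exists_countable_dense β
  refine ⟨fun ω ↦ ⨅ s ∈ D, if ω ∈ A s then s else ⊤, .biInf D hDc fun s _ ↦
    .ite (hmeas s) measurable_const measurable_const, fun t ↦ ⟨fun ω hω ↦ ?_, fun ω hω ↦ ?_⟩⟩
  · obtain ⟨s, -, hs⟩ : ∃ s ∈ D, (if ω ∈ A s then s else ⊤) < t := by
      simpa only [mem_preimage, mem_Iio, iInf_lt_iff, exists_prop] using hω
    split_ifs at hs with hsA
    · exact hmono hs.le hsA
    · exact absurd hs not_top_lt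
  · refine le_of_forall_gt_imp_ge_of_dense fun r htr ↦ ?_
    obtain ⟨s, hsD, hts, hsr⟩ := hD.exists_between htr
    exact (iInf₂_le s hsD).trans ((if_pos (hmono hts.le hω)).trans_le hsr.le)

theorem Atomless.exists_measurePreserving_unitInterval {μ : Measure Ω} [IsProbabilityMeasure μ]
    (hμ : Atomless μ) : ∃ U : Ω → I, MeasurePreserving U μ volume := by
  obtain ⟨A, hmono, hmeas, hμA⟩ := hμ.exists_monotone_measure_eq
  obtain ⟨U, hU, hUA⟩ :=
    exists_measurable_preimage_Iio_subset_subset_preimage_Iic hmono hmeas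
  have : IsProbabilityMeasure (μ.map U) := Measure.isProbabilityMeasure_map hU.aemeasurable
  refine ⟨U, hU, Measure.ext_of_Iic _ _ fun t ↦ ?_⟩
  rw [Measure.map_apply hU measurableSet_Iic, unitInterval.volume_Iic]
  refine le_antisymm ?_ (hμA t ▸ measure_mono (hUA t).2)
  rcases eq_or_lt_of_le (unitInterval.le_one' : t ≤ 1) with rfl | ht
  · simpa using prob_le_one
  have hcont : Tendsto (fun s : I ↦ ENNReal.ofReal s) (nhdsWithin t (Ioi t))
      (nhds (ENNReal.ofReal t)) :=
    (ENNReal.continuous_ofReal.comp continuous_subtype_val).continuousWithinAt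
  have : (nhdsWithin t (Ioi t)).NeBot := nhdsGT_neBot_of_exists_gt ⟨1, ht⟩
  refine ge_of_tendsto hcont ?_
  filter_upwards [self_mem_nhdsWithin] with s hts
  have hsub : U ⁻¹' Iic t ⊆ A s := (preimage_mono (Iic_subset_Iio.2 hts)).trans (hUA s).1
  exact hμA s ▸ measure_mono hsub

theorem ofReal_le_volume_iff_of_isLowerSet {S : Set I} (hS : IsLowerSet S) (p : I) :
    ENNReal.ofReal p ≤ volume S ↔ Iio p ⊆ S := by
  constructor
  · intro hp q hq
    by_contra hqS
    have hsub : S ⊆ Iio q := fun s hs ↦ not_le.1 fun h ↦ hqS (hS h hs)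
    have hle := hp.trans (measure_mono hsub)
    rw [unitInterval.volume_Iio, ENNReal.ofReal_le_ofReal_iff q.2.1] at hle
    exact hle.not_gt hq
  · intro hsub
    exact unitInterval.volume_Iio p ▸ measure_mono hsub

end Uniform

section VaR

variable {μ : Measure Ω} {X : Ω → ℝ} {p : ℝ}

theorem VaR_le_coe (hp : p ≠ 0) {x : ℝ} (hx : ENNReal.ofReal p ≤ μ {ω | X ω ≤ x}) :
    VaR μ X p ≤ x := by
  rw [VaR, if_neg hp]
  exact sInf_le ⟨x, hx, rfl⟩

theorem le_VaR (hp : p ≠ 0) {a : EReal}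
    (ha : ∀ x : ℝ, ENNReal.ofReal p ≤ μ {ω | X ω ≤ x} → a ≤ x) : a ≤ VaR μ X p := by
  rw [VaR, if_neg hp]
  exact le_sInf fun _ ⟨x, hx, hxeq⟩ ↦ hxeq ▸ ha x hx

theorem VaR_eq_of_forall_le_iff (hp : p ≠ 0) {a : EReal}
    (ha : ∀ x : ℝ, ENNReal.ofReal p ≤ μ {ω | X ω ≤ x} ↔ a ≤ x) : VaR μ X p = a :=
  le_antisymm (EReal.le_of_forall_lt_iff_le.1 fun x hx ↦ VaR_le_coe hp ((ha x).2 hx.le))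
    (le_VaR hp fun x ↦ (ha x).1)

theorem coe_le_VaR_zero {c : ℝ} (hc : ∀ᵐ ω ∂μ, c ≤ X ω) : (c : EReal) ≤ VaR μ X 0 := by
  rw [VaR, if_pos rfl]
  exact le_essInf_of_ae_le _ (hc.mono fun _ ↦ EReal.coe_le_coe)

theorem measure_le_eq_zero_of_lt_VaR_zero {x : ℝ} (hx : x < VaR μ X 0) :
    μ {ω | X ω ≤ x} = 0 := by
  rw [VaR, if_pos rfl] at hx
  refine measure_eq_zero_iff_ae_notMem.2 ?_
  filter_upwards [ae_lt_of_lt_essInf hx] with ω hω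
  exact not_le.2 (EReal.coe_lt_coe_iff.1 hω)

theorem VaR_monotoneOn (μ : Measure Ω) (X : Ω → ℝ) : MonotoneOn (VaR μ X) (Ici 0) := by
  intro p (hp : 0 ≤ p) q _ hpq
  rcases hp.eq_or_lt with rfl | hp
  · rcases hpq.eq_or_lt with rfl | hq
    · exact le_rfl
    refine le_VaR hq.ne' fun x hx ↦ not_lt.1 fun hlt ↦ ?_
    rw [measure_le_eq_zero_of_lt_VaR_zero hlt] at hx
    exact hx.not_gt (ENNReal.ofReal_pos.2 hq)
  · exact le_VaR (hp.trans_le hpq).ne' fun x hx ↦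
      VaR_le_coe hp.ne' ((ENNReal.ofReal_le_ofReal hpq).trans hx)

theorem VaR_ne_top [IsProbabilityMeasure μ] (X : Ω → ℝ) (hp : p ∈ Ico 0 1) :
    VaR μ X p ≠ ⊤ := by
  wlog hpos : 0 < p generalizing p
  · exact ne_top_of_le_ne_top (this (p := 1 / 2) (by norm_num) (by norm_num))
      (VaR_monotoneOn μ X hp.1 (by norm_num) (by linarith))
  have hlim := tendsto_measure_iUnion_atTop (μ := μ) (s := fun x : ℝ ↦ {ω | X ω ≤ x})
    fun _ _ hxy _ hω ↦ le_trans hω hxy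
  have huniv : ⋃ x : ℝ, {ω | X ω ≤ x} = univ :=
    eq_univ_of_forall fun ω ↦ mem_iUnion.2 ⟨X ω, le_refl (X ω)⟩
  rw [huniv, measure_univ] at hlim
  obtain ⟨x, hx⟩ := (hlim.eventually_const_lt (ENNReal.ofReal_lt_one.2 hp.2)).exists
  exact ne_top_of_le_ne_top (EReal.coe_ne_top x) (VaR_le_coe hpos.ne' hx.le)

theorem tendsto_VaR_nhdsLT [IsFiniteMeasure μ] (X : Ω → ℝ) (hp : 0 < p) :
    Tendsto (VaR μ X) (nhdsWithin p (Iio p)) (nhds (VaR μ X p)) := by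
  refine tendsto_order.2 ⟨fun a ha ↦ ?_, fun a ha ↦ ?_⟩
  · obtain ⟨y, hay, hy⟩ := EReal.lt_iff_exists_real_btwn.1 ha
    have hyp : μ.real {ω | X ω ≤ y} < p := (ENNReal.lt_ofReal_iff_toReal_lt
      (measure_ne_top _ _)).1 (not_le.1 fun h ↦ hy.not_ge (VaR_le_coe hp.ne' h))
    filter_upwards [Ioo_mem_nhdsLT hyp] with q hq
    have hqpos : 0 < q := measureReal_nonneg.trans_lt hq.1
    refine hay.trans_le (le_VaR hqpos.ne' fun x hx ↦ EReal.coe_le_coe (not_lt.1 fun hxy ↦ ?_))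
    have hqy : ENNReal.ofReal q ≤ μ {ω | X ω ≤ y} :=
      hx.trans (measure_mono fun ω hω ↦ le_trans hω hxy.le)
    exact hq.1.not_ge ((ENNReal.ofReal_le_iff_le_toReal (measure_ne_top _ _)).1 hqy)
  · filter_upwards [Ioo_mem_nhdsLT hp] with q hq
    exact (VaR_monotoneOn μ X hq.1.le hp.le hq.2.le).trans_lt ha

theorem tendsto_VaR_nhdsGT_zero [IsFiniteMeasure μ] (X : Ω → ℝ) :
    Tendsto (VaR μ X) (nhdsWithin 0 (Ioi 0)) (nhds (VaR μ X 0)) := by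
  refine tendsto_order.2 ⟨fun a ha ↦ ?_, fun a ha ↦ ?_⟩
  · filter_upwards [self_mem_nhdsWithin] with q (hq : 0 < q)
    exact ha.trans_le (VaR_monotoneOn μ X self_mem_Ici hq.le hq.le)
  · obtain ⟨y, hy, hya⟩ := EReal.lt_iff_exists_real_btwn.1 ha
    have hmeas : μ {ω | X ω ≤ y} ≠ 0 := fun h ↦ hy.not_ge <| coe_le_VaR_zero <|
      (measure_eq_zero_iff_ae_notMem.1 h).mono fun _ hω ↦ (not_le.1 hω).le
    have hpos : 0 < μ.real {ω | X ω ≤ y} := ENNReal.toReal_pos hmeas (measure_ne_top _ _)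
    filter_upwards [Ioo_mem_nhdsGT hpos] with q hq
    exact (VaR_le_coe hq.1.ne' ((ENNReal.ofReal_le_iff_le_toReal
      (measure_ne_top _ _)).2 hq.2.le)).trans_lt hya

theorem gVaRProfile_VaR [IsProbabilityMeasure μ] {c : ℝ} (hc : ∀ᵐ ω ∂μ, c ≤ X ω) :
    GVaRProfile (VaR μ X) := by
  have hbot (p : ℝ) (hp : p ∈ Icc (0 : ℝ) 1) : VaR μ X p ≠ ⊥ :=
    ne_bot_of_le_ne_bot (EReal.coe_ne_bot c)
      ((coe_le_VaR_zero hc).trans (VaR_monotoneOn μ X self_mem_Ici hp.1 hp.1))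
  refine ⟨⟨(VaR_monotoneOn μ X).mono Icc_subset_Ici_self, hbot, 0, by simp,
    VaR_ne_top X (by simp)⟩, fun p ↦ VaR_ne_top X, fun p hp ↦ ?_, ?_⟩
  · rw [nhdsWithin_Ico_eq_nhdsLT hp.1]
    exact tendsto_VaR_nhdsLT X hp.1
  · rw [nhdsWithin_Ioc_eq_nhdsGT zero_lt_one]
    exact tendsto_VaR_nhdsGT_zero X

end VaR

namespace GVaRProfile

open scoped unitInterval

variable {f g : ℝ → EReal}

theorem congr (hf : GVaRProfile f) (hfg : EqOn f g (Icc 0 1)) : GVaRProfile g := by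
  obtain ⟨⟨hmono, hbot, q, hq, hqtop⟩, hfin, hleft, hright⟩ := hf
  refine ⟨⟨hmono.congr hfg, fun p hp ↦ hfg hp ▸ hbot p hp, q, hq, hfg hq ▸ hqtop⟩,
    fun p hp ↦ hfg (Ico_subset_Icc_self hp) ▸ hfin p hp, fun p hp ↦ ?_, ?_⟩
  · rw [← hfg (Ioc_subset_Icc_self hp)]
    refine (hleft p hp).congr' (eventually_nhdsWithin_of_forall fun q hq ↦ ?_)
    exact hfg ⟨hq.1, hq.2.le.trans hp.2⟩
  · rw [← hfg (left_mem_Icc.2 zero_le_one)]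
    exact hright.congr' (eventually_nhdsWithin_of_forall fun q hq ↦ hfg (Ioc_subset_Icc_self hq))

theorem monotone_unitInterval (hg : GVaRProfile g) : Monotone fun t : I ↦ g t :=
  fun s t hst ↦ hg.1.1 s.2 t.2 hst

theorem coe_toReal (hg : GVaRProfile g) {p : ℝ} (hp : p ∈ Ico (0 : ℝ) 1) :
    ((g p).toReal : EReal) = g p :=
  EReal.coe_toReal (hg.2.1 p hp) (hg.1.2.1 p (Ico_subset_Icc_self hp))

theorem measurable_toReal (hg : GVaRProfile g) : Measurable fun t : I ↦ (g t).toReal :=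
  hg.monotone_unitInterval.measurable.ereal_toReal

theorem exists_le_toReal (hg : GVaRProfile g) : ∃ c : ℝ, ∀ t : I, c ≤ (g t).toReal := by
  refine ⟨min (g 0).toReal 0, fun t ↦ ?_⟩
  by_cases htop : g t = ⊤
  -- At `t = 1` the profile may be infinite, and then `EReal.toReal` returns `0`.
  · simp only [htop, EReal.toReal_top, min_le_right]
  · exact min_le_of_left_le (EReal.toReal_le_toReal
      (hg.monotone_unitInterval (unitInterval.nonneg' : 0 ≤ t))
      (hg.1.2.1 0 (left_mem_Icc.2 zero_le_one)) htop)

theorem le_iff_forall_lt (hg : GVaRProfile g) {p : I} (hp : 0 < p) {x : EReal} :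
    g p ≤ x ↔ ∀ q < p, g q ≤ x := by
  refine ⟨fun h q hq ↦ (hg.monotone_unitInterval hq.le).trans h, fun h ↦ ?_⟩
  have hp' : (0 : ℝ) < p := hp
  have hlim := hg.2.2.1 p ⟨hp', p.2.2⟩
  have : (nhdsWithin (p : ℝ) (Ico 0 p)).NeBot := by
    rw [nhdsWithin_Ico_eq_nhdsLT hp']
    infer_instance
  refine le_of_tendsto hlim (eventually_nhdsWithin_of_forall fun q hq ↦ ?_)
  exact h ⟨q, hq.1, hq.2.le.trans p.2.2⟩ hq.2

theorem volume_toReal_le (hg : GVaRProfile g) (x : ℝ) :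
    volume {t : I | (g t).toReal ≤ x} = volume {t : I | g t ≤ x} := by
  refine measure_congr ?_
  filter_upwards [Measure.ae_ne volume (1 : I)] with t ht
  have ht' : (t : ℝ) < 1 := unitInterval.lt_one_iff_ne_one.2 ht
  refine propext ?_
  change (g t).toReal ≤ x ↔ g t ≤ x
  rw [← EReal.coe_le_coe_iff, hg.coe_toReal ⟨t.2.1, ht'⟩]

theorem ofReal_le_volume_iff (hg : GVaRProfile g) {p : I} (hp : 0 < p) {x : ℝ} :
    ENNReal.ofReal p ≤ volume {t : I | (g t).toReal ≤ x} ↔ g p ≤ x := by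
  have hlower : IsLowerSet {t : I | g t ≤ x} :=
    fun s t hts hs ↦ (hg.monotone_unitInterval hts).trans hs
  rw [hg.volume_toReal_le, ofReal_le_volume_iff_of_isLowerSet hlower, hg.le_iff_forall_lt hp]
  rfl

theorem VaR_toReal_comp_eq {μ : Measure Ω} [IsFiniteMeasure μ] (hg : GVaRProfile g) {U : Ω → I}
    (hU : MeasurePreserving U μ volume) :
    EqOn (VaR μ fun ω ↦ (g (U ω)).toReal) g (Icc 0 1) := by
  have hpos : EqOn (VaR μ fun ω ↦ (g (U ω)).toReal) g (Ioc 0 1) := by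
    intro p hp
    refine VaR_eq_of_forall_le_iff hp.1.ne' fun x ↦ ?_
    have hpre : μ {ω | (g (U ω)).toReal ≤ x} = volume {t : I | (g t).toReal ≤ x} :=
      hU.measure_preimage (measurableSet_le hg.measurable_toReal
        measurable_const).nullMeasurableSet
    rw [hpre]
    exact hg.ofReal_le_volume_iff (p := ⟨p, hp.1.le, hp.2⟩) hp.1
  intro p hp
  rcases hp.1.eq_or_lt with rfl | h0
  · have hlim := hg.2.2.2
    rw [nhdsWithin_Ioc_eq_nhdsGT zero_lt_one] at hlim
    refine tendsto_nhds_unique_of_eventuallyEq (tendsto_VaR_nhdsGT_zero _) hlim ?_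
    filter_upwards [Ioc_mem_nhdsGT zero_lt_one] with q hq using hpos hq
  · exact hpos ⟨h0, hp.2⟩

end GVaRProfile

theorem stmt13_general (μ : Measure Ω) [IsProbabilityMeasure μ] (hatomless : Atomless μ)
    (g : ℝ → EReal) :
    GVaRProfile g
      ↔ ∃ Z : Ω → ℝ, Measurable Z ∧ (∃ c : ℝ, ∀ ω, c ≤ Z ω) ∧
          ∀ p ∈ Set.Icc (0:ℝ) 1, VaR μ Z p = g p := by
  constructor
  · intro hg
    obtain ⟨U, hU⟩ := hatomless.exists_measurePreserving_unitInterval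
    obtain ⟨c, hc⟩ := hg.exists_le_toReal
    exact ⟨fun ω ↦ (g (U ω)).toReal, hg.measurable_toReal.comp hU.measurable,
      ⟨c, fun ω ↦ hc (U ω)⟩, hg.VaR_toReal_comp_eq hU⟩
  · rintro ⟨Z, -, ⟨c, hc⟩, hZ⟩
    exact (gVaRProfile_VaR (Eventually.of_forall hc)).congr hZ

/-- A risk profile `g ∈ 𝒢` belongs to `𝒢_VaR` (finite on `[0,1)`,
left-continuous on `[0,1]`, right-continuous at `0`) iff there is a random variable
`Z` bounded from below such that `g(p) = VaR_p(Z)` for every `p ∈ [0,1]`. -/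
theorem stmt13 (μ : Measure Ω) [IsProbabilityMeasure μ] (hatomless : Atomless μ)
    (g : ℝ → EReal) (hg : IsRiskProfile g) :
    GVaRProfile g
      ↔ ∃ Z : Ω → ℝ, Measurable Z ∧ (∃ c : ℝ, ∀ ω, c ≤ Z ω) ∧
          ∀ p ∈ Set.Icc (0:ℝ) 1, VaR μ Z p = g p :=
  stmt13_general μ hatomless g
end
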